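/- For any integers t ≥ 2 and d ≥ 1, the asymptotic code rate of weak superimposed codes satisfies R(t,d) ≥ (log₂ e)/t · (1 − 1/t)^(t−1), where e is the base of the natural logarithm. -/

import Mathlib

/-!
The proof is a random coding argument. Take `n` words of length `l` with independent bits, each
equal to `1` with probability `p = 1 / t`. For a set `T` of `s ≤ t` of these words, a coordinate
has exactly one `1` on `T` with probability `q = s p (1 - p)^(s - 1) ≥ s r`, where
`r = (1 / t) (1 - 1 / t)^(t - 1)`. If `X` is the number of such coordinates and `0 < x < 1`, then
`E[x ^ X] = (1 - q (1 - x)) ^ l ≤ z ^ s` with `z = exp (-r (1 - x) l)` (`column_bound`), so by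
Markov's inequality `X < d` has probability at most `x ^ (-d) z ^ s`. The union bound over all
nonempty `T` costs at most `x ^ (-d) ((1 + z) ^ n - 1) ≤ x ^ (-d) (exp (n z) - 1)`, and if this is
below `1` some choice of `n` words is a weak `(t, d)`-superimposed code (`exists_matrix`,
`le_F_of_matrix`). For every `ρ < r` one can pick `x` with `ρ < r (1 - x)`; then
`n = ⌈exp (ρ l)⌉` satisfies `n z → 0`, hence `F t d l ≥ exp (ρ l)` for large `l`.
The expectations are finite weighted sums over all `0`-`1` matrices.
-/

/-- The coordinates in which exactly one vector of `S` has a `1`. -/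
def exactlyOneCoords {l : ℕ} (S : Finset (Fin l → Bool)) : Finset (Fin l) :=
  Finset.univ.filter (fun i => (S.filter (fun c => c i = true)).card = 1)

/-- A weak `(t,d)`-superimposed code of length `l`: for every subset `S` of `C` with
`2 ≤ |S| ≤ t`, there are at least `d` coordinates in which exactly one vector of `S` has a `1`. -/
def IsWeakSuperimposed (t d l : ℕ) (C : Finset (Fin l → Bool)) : Prop :=
  ∀ S ⊆ C, 2 ≤ S.card → S.card ≤ t → d ≤ (exactlyOneCoords S).card

/-- `F t d l` : the maximum size of a weak `(t,d)`-superimposed code of length `l`. -/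
noncomputable def F (t d l : ℕ) : ℕ :=
  sSup {n | ∃ C : Finset (Fin l → Bool), IsWeakSuperimposed t d l C ∧ C.card = n}

/-- `R t d` : the asymptotic code rate of weak `(t,d)`-superimposed codes. -/
noncomputable def R (t d : ℕ) : ℝ :=
  Filter.atTop.limsup (fun l : ℕ => Real.logb 2 (F t d l) / l)

/-- The probability of the column `c` when its bits are independent and equal to `1` with
probability `p`. -/
def colWeight {n : ℕ} (p : ℝ) (c : Fin n → Bool) : ℝ :=
  ∏ a, (if c a = true then p else 1 - p)

/-- The column `c` has exactly one `1` among the rows in `T`. -/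
def OneIn {n : ℕ} (T : Finset (Fin n)) (c : Fin n → Bool) : Prop :=
  (T.filter (fun a => c a = true)).card = 1

instance {n : ℕ} (T : Finset (Fin n)) (c : Fin n → Bool) : Decidable (OneIn T c) :=
  inferInstanceAs (Decidable (_ = _))

lemma sum_bool_prod {n : ℕ} (g : Fin n → Bool → ℝ) :
    ∑ c : Fin n → Bool, ∏ a, g a (c a) = ∏ a, (g a true + g a false) := by
  have h := Finset.prod_univ_sum (fun _ : Fin n => (Finset.univ : Finset Bool)) g
  rw [Fintype.piFinset_univ] at h
  rw [← h]
  simp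

lemma colWeight_nonneg {n : ℕ} {p : ℝ} (h0 : 0 ≤ p) (h1 : p ≤ 1) (c : Fin n → Bool) :
    0 ≤ colWeight p c := by
  refine Finset.prod_nonneg fun a _ => ?_
  split_ifs <;> linarith

lemma sum_colWeight (n : ℕ) (p : ℝ) : ∑ c : Fin n → Bool, colWeight p c = 1 := by
  unfold colWeight
  rw [sum_bool_prod (fun _ b => if b = true then p else 1 - p)]
  simp

/-- The probability that the row `a` has the only `1` on `T`. -/
lemma sum_colWeight_only {n : ℕ} (p : ℝ) (T : Finset (Fin n)) {a : Fin n} (ha : a ∈ T) :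
    ∑ c : Fin n → Bool, colWeight p c * (if ∀ b ∈ T, (c b = true ↔ b = a) then 1 else 0)
      = p * (1 - p) ^ (T.card - 1) := by
  have h : ∀ c : Fin n → Bool,
      colWeight p c * (if ∀ b ∈ T, (c b = true ↔ b = a) then 1 else 0)
        = ∏ b, ((if c b = true then p else 1 - p) *
            (if b ∈ T → (c b = true ↔ b = a) then 1 else 0)) := by
    intro c
    rw [Finset.prod_mul_distrib, colWeight]
    congr 1
    simp [Finset.prod_ite_zero]
  simp_rw [h]
  rw [sum_bool_prod (fun b v => (if v = true then p else 1 - p) *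
            (if b ∈ T → (v = true ↔ b = a) then 1 else 0))]
  have h2 : ∀ b : Fin n, ((if true = true then p else 1 - p) *
            (if b ∈ T → (true = true ↔ b = a) then 1 else 0) +
            (if false = true then p else 1 - p) *
            (if b ∈ T → (false = true ↔ b = a) then 1 else 0))
       = if b ∈ T then (if b = a then p else 1 - p) else 1 := by
    intro b
    by_cases hba : b = a
    · subst hba; simp [ha]
    · by_cases hb : b ∈ T <;> simp [hb, hba]
  refine (Finset.prod_congr rfl fun b _ => h2 b).trans ?_
  rw [Finset.prod_ite_mem, Finset.univ_inter, ← Finset.mul_prod_erase T _ ha]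
  rw [if_pos rfl]
  congr 1
  rw [Finset.prod_congr rfl (g := fun _ => 1 - p), Finset.prod_const, Finset.card_erase_of_mem ha]
  intro b hb
  rw [if_neg (Finset.ne_of_mem_erase hb)]

/-- The probability that a column has exactly one `1` on `T` is at least
`|T| p (1 - p) ^ (|T| - 1)`. -/
lemma le_sum_oneIn {n : ℕ} {p : ℝ} (h0 : 0 ≤ p) (h1 : p ≤ 1) (T : Finset (Fin n)) :
    T.card * (p * (1 - p) ^ (T.card - 1)) ≤
      ∑ c : Fin n → Bool, colWeight p c * (if OneIn T c then 1 else 0) := by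
  have : (T.card : ℝ) * (p * (1 - p) ^ (T.card - 1)) = ∑ a ∈ T, ∑ c : Fin n → Bool,
      colWeight p c * (if ∀ b ∈ T, (c b = true ↔ b = a) then 1 else 0) := by
    rw [Finset.sum_congr rfl (fun a ha => sum_colWeight_only p T ha)]
    simp
  rw [this, Finset.sum_comm]
  refine Finset.sum_le_sum fun c _ => ?_
  rw [← Finset.mul_sum]
  refine mul_le_mul_of_nonneg_left ?_ (colWeight_nonneg h0 h1 c)
  by_cases hc : ∃ a ∈ T, ∀ b ∈ T, (c b = true ↔ b = a)
  · obtain ⟨a, ha, hab⟩ := hc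
    have hone : OneIn T c := by
      rw [OneIn, Finset.card_eq_one]
      refine ⟨a, ?_⟩
      ext b
      simp only [Finset.mem_filter, Finset.mem_singleton]
      exact ⟨fun h => (hab b h.1).1 h.2, fun h => h ▸ ⟨ha, (hab a ha).2 rfl⟩⟩
    rw [if_pos hone, Finset.sum_eq_single_of_mem a ha]
    · split_ifs; norm_num
    · intro b hb hba
      exact if_neg fun h => hba ((hab b hb).1 ((h b hb).2 rfl))
  · rw [Finset.sum_eq_zero]
    · split_ifs <;> norm_num
    · intro a ha
      exact if_neg fun h => hc ⟨a, ha, h⟩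

/-- Exponential moment of the indicator that a single coordinate has exactly one `1` on `T`. -/
lemma column_bound {n : ℕ} {p x : ℝ} (h0 : 0 ≤ p) (h1 : p ≤ 1) (hx : x ≤ 1)
    (T : Finset (Fin n)) :
    ∑ c : Fin n → Bool, colWeight p c * (if OneIn T c then x else 1) ≤
      Real.exp (-((1 - x) * (T.card * (p * (1 - p) ^ (T.card - 1))))) := by
  have h : ∑ c : Fin n → Bool, colWeight p c * (if OneIn T c then x else 1)
      = 1 - (1 - x) * ∑ c : Fin n → Bool, colWeight p c * (if OneIn T c then 1 else 0) := by
    rw [Finset.mul_sum, eq_sub_iff_add_eq, ← Finset.sum_add_distrib]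
    refine Eq.trans ?_ (sum_colWeight n p)
    refine Finset.sum_congr rfl fun c _ => ?_
    split_ifs <;> ring
  rw [h]
  have h2 := mul_le_mul_of_nonneg_left (le_sum_oneIn h0 h1 T) (sub_nonneg.2 hx)
  have h3 := Real.add_one_le_exp (-((1 - x) * (T.card * (p * (1 - p) ^ (T.card - 1)))))
  linarith

/-- Existence of a good `n × l` matrix, stored as the list `M` of its columns, from Markov's
inequality and the union bound. -/
lemma exists_matrix {n l t d : ℕ} {p x r : ℝ} (h0 : 0 ≤ p) (h1 : p ≤ 1) (hx0 : 0 < x)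
    (hx : x ≤ 1) (hr : ∀ s ≤ t, r ≤ p * (1 - p) ^ (s - 1))
    (hn : Real.exp (n * Real.exp (-(r * (1 - x) * l))) - 1 < x ^ d) :
    ∃ M : Fin l → Fin n → Bool, ∀ T : Finset (Fin n), 2 ≤ T.card → T.card ≤ t →
      d ≤ (Finset.univ.filter (fun i => OneIn T (M i))).card := by
  by_contra! hbad
  set z := Real.exp (-(r * (1 - x) * l)) with hz
  have hz0 : 0 < z := Real.exp_pos _
  let P : Finset (Finset (Fin n)) := Finset.univ.filter (fun T => 2 ≤ T.card ∧ T.card ≤ t)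
  let W : (Fin l → Fin n → Bool) → ℝ := fun M => ∏ i, colWeight p (M i)
  let Y : Finset (Fin n) → (Fin l → Fin n → Bool) → ℝ := fun T M =>
    ∏ i, (if OneIn T (M i) then x else 1)
  have hW0 : ∀ M, 0 ≤ W M := fun M => Finset.prod_nonneg fun i _ => colWeight_nonneg h0 h1 _
  have hY0 : ∀ T M, 0 ≤ Y T M := fun T M => Finset.prod_nonneg fun i _ => by
    split_ifs <;> linarith
  have hW1 : ∑ M, W M = 1 := by
    rw [← Fintype.sum_pow, sum_colWeight, one_pow]
  have hmarkov : ∀ M, x ^ d ≤ ∑ T ∈ P, Y T M := by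
    intro M
    obtain ⟨T, hT2, hTt, hTd⟩ := hbad M
    have hTP : T ∈ P := by simp [P, hT2, hTt]
    refine le_trans ?_ (Finset.single_le_sum (f := fun T => Y T M) (fun T _ => hY0 T M) hTP)
    have hY : Y T M = x ^ (Finset.univ.filter (fun i => OneIn T (M i))).card := by
      simp [Y, Finset.prod_ite]
    simp only [hY]
    exact pow_le_pow_of_le_one hx0.le hx hTd.le
  have hmoment : ∀ T ∈ P, ∑ M, W M * Y T M ≤ z ^ T.card := by
    intro T hT
    have hTt : T.card ≤ t := by simp [P] at hT; exact hT.2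
    simp only [W, Y, ← Finset.prod_mul_distrib]
    rw [← Fintype.sum_pow (fun c : Fin n → Bool => colWeight p c * (if OneIn T c then x else 1))]
    refine (pow_le_pow_left₀ ?_ (column_bound h0 h1 hx T) l).trans ?_
    · refine Finset.sum_nonneg fun c _ => mul_nonneg (colWeight_nonneg h0 h1 c) ?_
      split_ifs <;> linarith
    · rw [hz, ← Real.exp_nat_mul, ← Real.exp_nat_mul, Real.exp_le_exp]
      have h2 := mul_le_mul_of_nonneg_left (hr _ hTt)
        (mul_nonneg (mul_nonneg (Nat.cast_nonneg (α := ℝ) l) (sub_nonneg.2 hx))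
          (Nat.cast_nonneg (α := ℝ) T.card))
      linarith
  have hunion : ∑ T ∈ P, z ^ T.card ≤ Real.exp (n * z) - 1 := by
    have hall : ∑ T : Finset (Fin n), z ^ T.card = (z + 1) ^ n := by
      have := Finset.sum_pow_mul_eq_add_pow z 1 (Finset.univ : Finset (Fin n))
      simpa using this
    have hsub : ∑ T ∈ P, z ^ T.card + 1 ≤ ∑ T : Finset (Fin n), z ^ T.card := by
      have hne : (∅ : Finset (Fin n)) ∉ P := by simp [P]
      have h3 := Finset.sum_le_sum_of_subset_of_nonneg (f := fun T : Finset (Fin n) => z ^ T.card)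
        (Finset.subset_univ (insert ∅ P)) (fun T _ _ => by positivity)
      rw [Finset.sum_insert hne] at h3
      simp only [Finset.card_empty, pow_zero] at h3
      linarith
    have hexp : (z + 1) ^ n ≤ Real.exp (n * z) := by
      rw [Real.exp_nat_mul]
      exact pow_le_pow_left₀ (by linarith) (Real.add_one_le_exp z) n
    linarith
  have hfinal : x ^ d ≤ ∑ T ∈ P, z ^ T.card := by
    calc x ^ d = ∑ M, W M * x ^ d := by rw [← Finset.sum_mul, hW1, one_mul]
      _ ≤ ∑ M, W M * ∑ T ∈ P, Y T M :=
          Finset.sum_le_sum fun M _ => mul_le_mul_of_nonneg_left (hmarkov M) (hW0 M)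
      _ = ∑ T ∈ P, ∑ M, W M * Y T M := by
          simp_rw [Finset.mul_sum]
          exact Finset.sum_comm
      _ ≤ _ := Finset.sum_le_sum hmoment
  linarith

lemma card_le_two_pow {l : ℕ} (C : Finset (Fin l → Bool)) : C.card ≤ 2 ^ l := by
  simpa using C.card_le_univ

lemma F_le (t d l : ℕ) : F t d l ≤ 2 ^ l := by
  refine csSup_le' ?_
  rintro n ⟨C, -, rfl⟩
  exact card_le_two_pow C

/-- The rows of a good matrix are distinct, because `t ≥ 2` and `d ≥ 1`, and form a code. -/
lemma le_F_of_matrix {n l t d : ℕ} (ht : 2 ≤ t) (hd : 1 ≤ d) (M : Fin l → Fin n → Bool)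
    (hM : ∀ T : Finset (Fin n), 2 ≤ T.card → T.card ≤ t →
      d ≤ (Finset.univ.filter (fun i => OneIn T (M i))).card) :
    n ≤ F t d l := by
  let row : Fin n → Fin l → Bool := fun a i => M i a
  have hinj : Function.Injective row := by
    intro a b hab
    by_contra hne
    have hcard : ({a, b} : Finset (Fin n)).card = 2 := Finset.card_pair hne
    have h := hM {a, b} hcard.ge (hcard.le.trans ht)
    obtain ⟨i, hi⟩ := Finset.card_pos.1 (hd.trans h)
    have hi' := (Finset.mem_filter.1 hi).2
    have hi2 : M i a = M i b := congrFun hab i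
    rw [OneIn] at hi'
    cases hb : M i b <;>
      simp [Finset.filter_insert, Finset.filter_singleton, hi2, hb, hne] at hi'
  refine le_csSup ⟨2 ^ l, ?_⟩ ⟨Finset.univ.image row, ?_, ?_⟩
  · rintro m ⟨C, -, rfl⟩
    exact card_le_two_pow C
  · intro S hS hS2 hSt
    obtain ⟨T, -, rfl⟩ := Finset.subset_image_iff.1 hS
    rw [Finset.card_image_of_injective _ hinj] at hS2 hSt
    convert hM T hS2 hSt using 2
    unfold exactlyOneCoords
    refine Finset.filter_congr fun i _ => ?_
    rw [Finset.filter_image, Finset.card_image_of_injective _ hinj, OneIn]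
  · rw [Finset.card_image_of_injective _ hinj]
    simp

/-- Every exponent `ρ` below `r` is eventually achieved. -/
lemma eventually_exp_le_F {t d : ℕ} (ht : 2 ≤ t) (hd : 1 ≤ d) {ρ : ℝ} (hρ0 : 0 ≤ ρ)
    (hρ : ρ < 1 / (t : ℝ) * (1 - 1 / (t : ℝ)) ^ (t - 1)) :
    ∀ᶠ l : ℕ in Filter.atTop, Real.exp (ρ * l) ≤ F t d l := by
  set p : ℝ := 1 / (t : ℝ) with hp
  set r : ℝ := p * (1 - p) ^ (t - 1) with hr
  have ht' : (2 : ℝ) ≤ t := by exact_mod_cast ht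
  have h0 : 0 ≤ p := by positivity
  have h1 : p ≤ 1 := by rw [hp, div_le_one (by linarith)]; linarith
  have hr0 : 0 < r := lt_of_le_of_lt hρ0 hρ
  -- This `x` gives `r * (1 - x) = (r + ρ) / 2`.
  obtain ⟨x, hx0, hx1, hxr⟩ : ∃ x : ℝ, 0 < x ∧ x ≤ 1 ∧ ρ < r * (1 - x) := by
    refine ⟨(r - ρ) / (2 * r), div_pos (by linarith) (by linarith), ?_, ?_⟩
    · rw [div_le_one (by linarith)]; linarith
    · have : r * (1 - (r - ρ) / (2 * r)) = (r + ρ) / 2 := by field_simp; ring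
      linarith
  have hlim : Filter.Tendsto (fun l : ℕ => Real.exp (2 * Real.exp (-((r * (1 - x) - ρ) * l))) - 1)
      Filter.atTop (nhds 0) := by
    have h3 : Filter.Tendsto (fun l : ℕ => (r * (1 - x) - ρ) * (l : ℝ)) Filter.atTop Filter.atTop :=
      tendsto_natCast_atTop_atTop.const_mul_atTop (by linarith)
    have h4 := Real.tendsto_exp_neg_atTop_nhds_zero.comp h3
    have h5 := ((Real.continuous_exp.tendsto _).comp (h4.const_mul 2)).sub_const 1
    simpa [Function.comp_def] using h5
  filter_upwards [hlim.eventually (gt_mem_nhds (pow_pos hx0 d))] with l hl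
  have hn : ((⌈Real.exp (ρ * l)⌉₊ : ℕ) : ℝ) ≤ 2 * Real.exp (ρ * l) := by
    have h6 := Nat.ceil_lt_add_one (Real.exp_pos (ρ * l)).le
    have h7 : 1 ≤ Real.exp (ρ * l) := Real.one_le_exp (by positivity)
    linarith
  have hrs : ∀ s ≤ t, r ≤ p * (1 - p) ^ (s - 1) := fun s hs =>
    mul_le_mul_of_nonneg_left
      (pow_le_pow_of_le_one (by linarith) (by linarith) (by omega)) h0
  obtain ⟨M, hM⟩ := exists_matrix (n := ⌈Real.exp (ρ * l)⌉₊) (l := l) (d := d) h0 h1 hx0 hx1 hrs (by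
    refine lt_of_le_of_lt (sub_le_sub_right (Real.exp_le_exp.2 ?_) 1) hl
    refine (mul_le_mul_of_nonneg_right hn (Real.exp_pos _).le).trans (le_of_eq ?_)
    rw [mul_assoc, ← Real.exp_add]
    congr 2
    ring)
  refine (Nat.le_ceil _).trans ?_
  exact_mod_cast le_F_of_matrix ht hd M hM

theorem weak_superimposed_rate_lower_bound_original (t d : ℕ) (ht : 2 ≤ t) (hd : 1 ≤ d) :
    Real.logb 2 (Real.exp 1) / (t : ℝ) * (1 - 1 / (t : ℝ)) ^ (t - 1) ≤ R t d := by
  set r : ℝ := 1 / (t : ℝ) * (1 - 1 / (t : ℝ)) ^ (t - 1) with hr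
  have ht' : (2 : ℝ) ≤ t := by exact_mod_cast ht
  have hr0 : 0 < r := by
    have : 1 / (t : ℝ) < 1 := by rw [div_lt_one (by linarith)]; linarith
    have h2 : 0 < 1 - 1 / (t : ℝ) := by linarith
    positivity
  have hlog2 : 0 < Real.log 2 := Real.log_pos one_lt_two
  have hgoal : Real.logb 2 (Real.exp 1) / (t : ℝ) * (1 - 1 / (t : ℝ)) ^ (t - 1)
      = r / Real.log 2 := by
    rw [Real.logb, Real.log_exp, hr]
    ring
  rw [hgoal, div_le_iff₀ hlog2]
  refine le_of_forall_lt_imp_le_of_dense fun σ hσ => ?_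
  -- The achievability lemma is for nonnegative exponents.
  refine (le_max_left σ 0).trans ?_
  have hρ : max σ 0 < r := max_lt hσ hr0
  have hρ0 : 0 ≤ max σ 0 := le_max_right _ _
  generalize max σ 0 = ρ at hρ hρ0
  rw [← div_le_iff₀ hlog2]
  refine Filter.le_limsup_of_frequently_le (Filter.Eventually.frequently ?_) ?_
  · filter_upwards [eventually_exp_le_F ht hd hρ0 hρ, Filter.eventually_gt_atTop 0] with l hl hl0
    have hl0' : (0 : ℝ) < l := by exact_mod_cast hl0
    have h3 : ρ * l ≤ Real.log (F t d l) :=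
      (Real.le_log_iff_exp_le ((Real.exp_pos _).trans_le hl)).2 hl
    rw [le_div_iff₀ hl0', Real.logb, div_mul_eq_mul_div]
    gcongr
  -- The rates are bounded by `1`, so that the real `limsup` is not a junk value.
  · refine Filter.isBoundedUnder_of ⟨1, fun l => ?_⟩
    refine div_le_one_of_le₀ ?_ (Nat.cast_nonneg l)
    rcases Nat.eq_zero_or_pos (F t d l) with h | h
    · simp [h]
    · rw [Real.logb_le_iff_le_rpow one_lt_two (by exact_mod_cast h), Real.rpow_natCast]
      exact_mod_cast F_le t d l
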